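/- Let τ = (1 + √5)/2 and let p ∈ {4, 5, 10}. Then the lattice S(p,τ) is generated by the union of two mirror stabilizers: the subgroup of GL(3,ℂ) generated by Stab(m₁) ∪ Stab(m₂) equals S(p,τ), where m₁ is the mirror of the complex reflection R₁ and m₂ = span_ℂ{e₁, e₃} is the mirror of the complex reflection (R₁R₃)⁵. -/

import Mathlib

open Matrix

noncomputable section

/-- `u = exp(2πi/(3p))`. -/
def uPar (p : ℕ) : ℂ := Complex.exp (2 * Real.pi * Complex.I / (3 * p))

/-- `α = 2 − u³ − conj(u)³`. -/
def alphaPar (p : ℕ) : ℂ :=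
  2 - uPar p ^ 3 - starRingEnd ℂ (uPar p) ^ 3

/-- `β = (conj(u)² − u)·τ`. -/
def betaPar (p : ℕ) (τ : ℂ) : ℂ := (starRingEnd ℂ (uPar p) ^ 2 - uPar p) * τ

/-- The generator `R₁` of `S(p,τ)`. -/
def R1S (p : ℕ) (τ : ℂ) : Matrix (Fin 3) (Fin 3) ℂ :=
  !![uPar p ^ 2, τ, -(uPar p) * starRingEnd ℂ τ;
     0, starRingEnd ℂ (uPar p), 0;
     0, 0, starRingEnd ℂ (uPar p)]

/-- The reflection `R₂ = J·R₁·J⁻¹` of `S(p,τ)`. -/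
def R2S (p : ℕ) (τ : ℂ) : Matrix (Fin 3) (Fin 3) ℂ :=
  !![starRingEnd ℂ (uPar p), 0, 0;
     -(uPar p) * starRingEnd ℂ τ, uPar p ^ 2, τ;
     0, 0, starRingEnd ℂ (uPar p)]

/-- The reflection `R₃ = J·R₂·J⁻¹` of `S(p,τ)`. -/
def R3S (p : ℕ) (τ : ℂ) : Matrix (Fin 3) (Fin 3) ℂ :=
  !![starRingEnd ℂ (uPar p), 0, 0;
     0, starRingEnd ℂ (uPar p), 0;
     τ, -(uPar p) * starRingEnd ℂ τ, uPar p ^ 2]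

/-- The cyclic permutation matrix `J`. -/
def Jmat : Matrix (Fin 3) (Fin 3) ℂ :=
  !![0, 0, 1; 1, 0, 0; 0, 1, 0]

/-- The linear functional `x ↦ a·x₁ + b·x₂ + c·x₃` on `ℂ³`. -/
def lfun (a b c : ℂ) : (Fin 3 → ℂ) →ₗ[ℂ] ℂ :=
  a • (LinearMap.proj 0 : (Fin 3 → ℂ) →ₗ[ℂ] ℂ) +
    b • (LinearMap.proj 1 : (Fin 3 → ℂ) →ₗ[ℂ] ℂ) +
    c • (LinearMap.proj 2 : (Fin 3 → ℂ) →ₗ[ℂ] ℂ)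

/-- The mirror of `R₁`: `{x ∈ ℂ³ : α·x₁ + β·x₂ + conj(β)·x₃ = 0}`,
the `H`-orthogonal complement of `e₁`. -/
def mirror1 (p : ℕ) (τ : ℂ) : Submodule ℂ (Fin 3 → ℂ) :=
  LinearMap.ker (lfun (alphaPar p) (betaPar p τ) (starRingEnd ℂ (betaPar p τ)))

/-- The stabilizer of a subspace `m` of `ℂ³` inside a subgroup `S` of `GL(3,ℂ)`:
the set of elements of `S` mapping `m` onto itself. -/
def mirrorStab (S : Subgroup (GL (Fin 3) ℂ)) (m : Submodule ℂ (Fin 3 → ℂ)) :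
    Set (GL (Fin 3) ℂ) :=
  {g | g ∈ S ∧ m.map (Matrix.mulVecLin (g : Matrix (Fin 3) (Fin 3) ℂ)) = m}

end

theorem map_eq_of_le (g : GL (Fin 3) ℂ) (m : Submodule ℂ (Fin 3 → ℂ))
    (h : m.map (Matrix.mulVecLin (g : Matrix (Fin 3) (Fin 3) ℂ)) ≤ m) :
    m.map (Matrix.mulVecLin (g : Matrix (Fin 3) (Fin 3) ℂ)) = m := by
  have hinj : Function.Injective (Matrix.mulVecLin (g : Matrix (Fin 3) (Fin 3) ℂ)) := by
    have := Matrix.mulVec_injective_of_isUnit (A := (g : Matrix (Fin 3) (Fin 3) ℂ)) g.isUnit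
    exact this
  apply Submodule.eq_of_le_of_finrank_eq h
  exact (Submodule.equivMapOfInjective _ hinj m).finrank_eq.symm

theorem mem_m2 (x : Fin 3 → ℂ) :
    x ∈ Submodule.span ℂ {(Pi.single 0 1 : Fin 3 → ℂ), Pi.single 2 1} ↔ x 1 = 0 := by
  rw [Submodule.mem_span_pair]
  constructor
  · rintro ⟨a, b, rfl⟩
    simp
  · intro h
    refine ⟨x 0, x 2, ?_⟩
    ext i
    fin_cases i <;> simp [h]

theorem u_mul_conj (p : ℕ) : uPar p * starRingEnd ℂ (uPar p) = 1 := by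
  have h : ‖uPar p‖ = 1 := by
    have : uPar p = Complex.exp (((2 * Real.pi / (3 * p) : ℝ) : ℂ) * Complex.I) := by
      unfold uPar
      congr 1
      push_cast
      ring
    rw [this, Complex.norm_exp_ofReal_mul_I]
  rw [Complex.mul_conj, Complex.normSq_eq_norm_sq, h]
  simp

/-- For `τ = (1+√5)/2` and `p ∈ {4,5,10}`, the lattice `S(p,τ)` is generated by
the union of the stabilizers of the mirror of `R₁` and of the mirror
`span{e₁, e₃}` of the complex reflection `(R₁R₃)⁵`. -/
theorem stmt17 (p : ℕ) (hp : p = 4 ∨ p = 5 ∨ p = 10)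
    (τ : ℂ) (hτ : τ = (1 + Real.sqrt 5) / 2)
    (r₁ j : GL (Fin 3) ℂ)
    (hr₁ : (↑r₁ : Matrix (Fin 3) (Fin 3) ℂ) = R1S p τ)
    (hj : (↑j : Matrix (Fin 3) (Fin 3) ℂ) = Jmat) :
    Subgroup.closure
        (mirrorStab (Subgroup.closure {r₁, j}) (mirror1 p τ) ∪
          mirrorStab (Subgroup.closure {r₁, j})
            (Submodule.span ℂ
              {Pi.single 0 1, Pi.single 2 1})) =
      Subgroup.closure {r₁, j} := by
  have hc : starRingEnd ℂ τ = τ := by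
    have : τ = (((1 + Real.sqrt 5) / 2 : ℝ) : ℂ) := by rw [hτ]; push_cast; ring
    rw [this, Complex.conj_ofReal]
  have ht : τ ^ 2 = τ + 1 := by
    have h5 : ((Real.sqrt 5 : ℝ) : ℂ) ^ 2 = 5 := by
      rw [← Complex.ofReal_pow, Real.sq_sqrt (by norm_num)]; norm_num
    rw [hτ]
    linear_combination h5 / 4
  have huv := u_mul_conj p
  set S := Subgroup.closure {r₁, j} with hS
  have hr : r₁ ∈ S := Subgroup.subset_closure (by simp)
  have hjS : j ∈ S := Subgroup.subset_closure (by simp)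
  apply le_antisymm
  · rw [Subgroup.closure_le]
    rintro g (hg | hg)
    · exact hg.1
    · exact hg.1
  set T := Subgroup.closure (mirrorStab S (mirror1 p τ) ∪
          mirrorStab S (Submodule.span ℂ {Pi.single 0 1, Pi.single 2 1})) with hT
  -- the element `R₃`
  have hr3 : (((j * j * r₁ * j : GL (Fin 3) ℂ)) : Matrix (Fin 3) (Fin 3) ℂ) = R3S p τ := by
    simp only [Units.val_mul, hr₁, hj, R1S, R3S, Jmat]
    ext a b
    fin_cases a <;> fin_cases b <;> simp [Matrix.mul_apply, Fin.sum_univ_three]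
  have h1T : r₁ ∈ T := by
    apply Subgroup.subset_closure
    right
    refine ⟨hr, map_eq_of_le _ _ ?_⟩
    rintro _ ⟨x, hx, rfl⟩
    have hx' := (mem_m2 x).1 hx
    rw [mem_m2]
    simp [hr₁, R1S, Matrix.mulVec, dotProduct, Fin.sum_univ_three, hx']
  have h3T : j * j * r₁ * j ∈ T := by
    apply Subgroup.subset_closure
    right
    refine ⟨by exact S.mul_mem (S.mul_mem (S.mul_mem hjS hjS) hr) hjS, map_eq_of_le _ _ ?_⟩
    rintro _ ⟨x, hx, rfl⟩
    have hx' := (mem_m2 x).1 hx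
    rw [mem_m2]
    simp only [hr3]
    simp [R3S, Matrix.mulVec, dotProduct, Fin.sum_univ_three, hx']
  set r₃ := j * j * r₁ * j with hr3def
  have h3S : r₃ ∈ S := S.mul_mem (S.mul_mem (S.mul_mem hjS hjS) hr) hjS
  have hMT : j * (r₁ * r₃ * (r₁ * r₃)) ∈ T := by
    apply Subgroup.subset_closure
    left
    refine ⟨S.mul_mem hjS (S.mul_mem (S.mul_mem hr h3S) (S.mul_mem hr h3S)),
      map_eq_of_le _ _ ?_⟩
    rintro _ ⟨x, hx, rfl⟩
    simp only [mirror1, SetLike.mem_coe, LinearMap.mem_ker] at hx ⊢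
    simp only [Units.val_mul, hr₁, hj, hr3]
    rw [Matrix.mulVecLin_apply, ← Matrix.mulVec_mulVec, ← Matrix.mulVec_mulVec,
      ← Matrix.mulVec_mulVec, ← Matrix.mulVec_mulVec]
    simp [lfun, alphaPar, betaPar, R1S, R3S, Jmat, Matrix.mulVec, dotProduct,
      Fin.sum_univ_three, hc] at hx ⊢
    generalize uPar p = u at *
    generalize starRingEnd ℂ u = v at *
    generalize x 0 = a at *
    generalize x 1 = b at *
    generalize x 2 = c at *
    clear hr3 hr₁ hj hc hτ
    grind
  have hjT : j ∈ T := by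
    have := T.mul_mem hMT (T.inv_mem (T.mul_mem (T.mul_mem h1T h3T) (T.mul_mem h1T h3T)))
    rwa [mul_inv_cancel_right] at this
  rw [hS, Subgroup.closure_le]
  rintro g (rfl | rfl)
  · exact h1T
  · exact hjT
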